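/- arXiv:2508.14269 — 2 statements merged into one kernel-verified Lean document; each statement's English description precedes it below -/
import Mathlib

section
/- Let k ≥ 4 log₂ n. If the rooted graph J[W,Z] (on an n-vertex ground set) contains no k-sunflower and no vertex of Z \ W is isolated in J[W,Z], then aut(W,Z) ≤ (16k)^{e(W,Z)}. -/
open SimpleGraph

/-- Expected number of copies of `F` in `G(n,p)`: `(n)_{v_F} p^{e_F} / aut(F)`. -/
noncomputable def expCount (n : ℕ) (p : ℝ) {β : Type} [Fintype β] (F : SimpleGraph β) : ℝ :=
  (n.descFactorial (Fintype.card β)) * p ^ (Nat.card F.edgeSet) / (Nat.card (F ≃g F))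

/-- `J` is `q`-sparse (w.r.t. ground-set size `n`): every subgraph `I ⊆ J` has
`(n)_{v_I} q^{e_I} / aut(I) ≥ 1`. -/
def ExpSparse (n : ℕ) (q : ℝ) {β : Type} (J : SimpleGraph β) : Prop :=
  ∀ I : J.Subgraph, 1 ≤ (n.descFactorial (Nat.card I.verts)) * q ^ (Nat.card I.edgeSet) /
      (Nat.card (I.coe ≃g I.coe))

/-- `N(H,F)`: the number of subgraphs of `H` isomorphic to `F`. -/
noncomputable def copyCount {α β : Type} (H : SimpleGraph α) (F : SimpleGraph β) : ℕ :=
  Nat.card {H' : H.Subgraph // Nonempty (F ≃g H'.coe)}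

/-- Edge set of the rooted graph `J[W,Z]`: edges of `J` inside `Z` not inside `W`. -/
def rootedEdges {V : Type} (J : SimpleGraph V) (W Z : Finset V) : Set (Sym2 V) :=
  {e | e ∈ J.edgeSet ∧ (∀ x ∈ e, x ∈ Z) ∧ ¬ ∀ x ∈ e, x ∈ W}

/-- `e(W,Z)`: the number of edges of `J[W,Z]`. -/
noncomputable def eWZ {V : Type} (J : SimpleGraph V) (W Z : Finset V) : ℕ :=
  Nat.card (rootedEdges J W Z)

/-- `aut(W,Z)`: the number of automorphisms of `J[W,Z]` fixing `W` pointwise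
(realized as permutations of the ground set fixing everything outside `Z`). -/
noncomputable def autWZ {V : Type} (J : SimpleGraph V) (W Z : Finset V) : ℕ :=
  Nat.card {σ : Equiv.Perm V // (∀ v ∈ W, σ v = v) ∧ (∀ v, v ∉ Z → σ v = v) ∧
     ∀ e, e ∈ rootedEdges J W Z ↔ Sym2.map σ e ∈ rootedEdges J W Z}

/-- `μ_p(W,Z) = n^{v(W,Z)} p^{e(W,Z)} / aut(W,Z)`. -/
noncomputable def mu {V : Type} [DecidableEq V] (n : ℕ) (p : ℝ) (J : SimpleGraph V)
    (W Z : Finset V) : ℝ :=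
  (n : ℝ) ^ ((Z \ W).card) * p ^ (eWZ J W Z) / (autWZ J W Z)

/-- `J[W,Z]` is `p`-leading: `μ_p(Y,Z) < 1` for all `W ⊊ Y ⊊ Z`. -/
def Leading {V : Type} [DecidableEq V] (n : ℕ) (p : ℝ) (J : SimpleGraph V)
    (W Z : Finset V) : Prop :=
  ∀ Y : Finset V, W ⊂ Y → Y ⊂ Z → mu n p J Y Z < 1

/-- A `k`-sunflower in `J[W,Z]`: pairwise disjoint nonempty petals `P i ⊆ Z \ W`
with no edges between distinct petals, whose rooted graphs over the common
core `Z \ ∪ P` are pairwise isomorphic fixing the core pointwise. -/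
def IsSunflower {V : Type} [DecidableEq V] (J : SimpleGraph V) (W Z : Finset V)
    {k : ℕ} (P : Fin k → Finset V) : Prop :=
  (∀ i, (P i).Nonempty ∧ P i ⊆ Z \ W) ∧
  (∀ i j, i ≠ j → Disjoint (P i) (P j)) ∧
  (∀ i j, i ≠ j → ∀ u ∈ P i, ∀ v ∈ P j, ¬ J.Adj u v) ∧
  (∀ i j : Fin k, ∃ σ : Equiv.Perm V,
     (∀ v ∈ Z \ (Finset.univ.biUnion P), σ v = v) ∧
     (P i).image σ = P j ∧
     (∀ e, e ∈ rootedEdges J (Z \ Finset.univ.biUnion P) ((Z \ Finset.univ.biUnion P) ∪ P i)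
        ↔ Sym2.map σ e ∈ rootedEdges J (Z \ Finset.univ.biUnion P) ((Z \ Finset.univ.biUnion P) ∪ P j)))

/-!
By the orbit–stabilizer theorem, fixing the vertices one at a time bounds the number of
automorphisms of `J[W,Z]` by the product of the successive orbit sizes, and the edges of `J[W,Z]`
pay for these factors.

A vertex of degree at least `log₂ n` costs a factor `n ≤ 2 ^ deg`. The degrees sum to `2e`, so
fixing all these vertices costs at most `4 ^ e`. Let `Y` be the set of vertices fixed so far. In
the graph without `Y`, all degrees are at most `k` and the components are fixed one after the
other. Any two components met by the orbit of a vertex `v` are carried to each other by an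
automorphism fixing `Y`, so `k` of them would form a sunflower; hence `v` has at most `k |C|`
images, where `C` is its component. Each further vertex of `C` is adjacent to an already fixed one
and has at most `k` images, and the last vertex of `C` has only one. For `|C| ≥ 2` this costs
`|C| k ^ (|C| - 1) ≤ (2k) ^ (|C| - 1)` and `C` has at least `|C| - 1` edges; a
singleton costs `k` and has an edge into `Y`.
-/

namespace SunflowerAut

theorem le_pow_of_logb_le {b n k : ℕ} (hb : 1 < b) (h : Real.logb b n ≤ k) : n ≤ b ^ k := by
  rw [← Nat.clog_le_iff_le_pow hb, ← Real.natCeil_logb_natCast]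
  exact Nat.ceil_le.2 h

section Sets

variable {α β : Type*}

theorem ncard_le_mul_ncard_image {s : Set α} (hs : s.Finite) {f : α → β} {m : ℕ}
    (hm : ∀ b ∈ f '' s, {a ∈ s | f a = b}.ncard ≤ m) : s.ncard ≤ m * (f '' s).ncard := by
  classical
  lift s to Finset α using hs
  rw [Set.ncard_coe_finset, ← Finset.coe_image, Set.ncard_coe_finset]
  refine Finset.card_le_mul_card_image s m fun b hb ↦ ?_
  rw [← Set.ncard_coe_finset]
  simpa using hm b (by simpa using hb)

theorem ncard_diff_insert_add_one [Finite α] {A S : Set α} {y : α} (hy : y ∈ A \ S) :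
    (A \ insert y S).ncard + 1 = (A \ S).ncard := by
  rw [← Set.union_singleton, ← Set.sdiff_sdiff, Set.ncard_sdiff_singleton_add_one hy]

theorem exists_perm_eqOn [Finite α] {A B : Set α} (τ : Equiv.Perm α)
    (hA : Disjoint A B) (hτA : Disjoint (τ '' A) B) :
    ∃ σ : Equiv.Perm α, Set.EqOn σ τ A ∧ ∀ v ∈ B, σ v = v := by
  classical
  have heq : Set.EqOn (A.piecewise τ id) τ A := A.piecewise_eqOn τ id
  have hid : Set.EqOn (A.piecewise τ id) id B := fun v hv ↦
    A.piecewise_eq_of_notMem τ id (Set.disjoint_right.1 hA hv)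
  have hinj : Set.InjOn (A.piecewise τ id) (A ∪ B) := by
    refine (Set.injOn_union hA).2
      ⟨heq.injOn_iff.2 τ.injective.injOn, hid.injOn_iff.2 Function.injective_id.injOn,
        fun a ha b hb ↦ ?_⟩
    rw [heq ha, hid hb]
    exact (hτA.ne_of_mem (Set.mem_image_of_mem τ ha) hb)
  obtain ⟨σ, hσ⟩ := Equiv.Perm.exists_extending_pair (fun v : ↑(A ∪ B) ↦ (v : α))
    (fun v ↦ A.piecewise τ id v) Subtype.val_injective hinj.injective
  exact ⟨σ, fun v hv ↦ (hσ ⟨v, .inl hv⟩).trans (heq hv),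
    fun v hv ↦ (hσ ⟨v, .inr hv⟩).trans (hid hv)⟩

end Sets

section FixingSubgroup

open MulAction

variable {M α : Type*} [Group M] [MulAction M α]

theorem smul_mem_iff_of_mem_fixingSubgroup {S : Set α} {g : M} (hg : g ∈ fixingSubgroup M S)
    {a : α} : g • a ∈ S ↔ a ∈ S := by
  refine ⟨fun h ↦ ?_, fun h ↦ ?_⟩
  · rwa [← MulAction.injective g (hg ⟨_, h⟩)]
  · rwa [show g • a = a from hg ⟨a, h⟩]

theorem card_fixingSubgroup_eq_ncard_orbit_mul (S : Set α) (a : α) :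
    Nat.card (fixingSubgroup M S) =
      (orbit (fixingSubgroup M S) a).ncard * Nat.card (fixingSubgroup M (insert a S)) := by
  have stabilizer_eq : stabilizer (fixingSubgroup M S) a =
      (fixingSubgroup M (insert a S)).subgroupOf (fixingSubgroup M S) := by
    ext g
    simp [Subgroup.mem_subgroupOf, SubMulAction.mem_fixingSubgroup_insert_iff, Subgroup.smul_def]
  have insert_le : fixingSubgroup M (insert a S) ≤ fixingSubgroup M S :=
    fixingSubgroup_antitone M α (Set.subset_insert a S)
  rw [← Subgroup.index_mul_card (stabilizer (fixingSubgroup M S) a), index_stabilizer,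
    stabilizer_eq, Nat.card_congr (Subgroup.subgroupOfEquivOfLe insert_le).toEquiv]

theorem card_fixingSubgroup_le_pow_ncard_mul [Finite α] (S T : Set α) :
    Nat.card (fixingSubgroup M S) ≤
      Nat.card α ^ T.ncard * Nat.card (fixingSubgroup M (S ∪ T)) := by
  induction T, T.toFinite using Set.Finite.induction_on with
  | empty => simp
  | @insert a T ha _ ih =>
    rw [Set.ncard_insert_of_notMem ha, Set.union_insert, pow_succ, mul_assoc]
    refine ih.trans (Nat.mul_le_mul_left _ ?_)
    rw [card_fixingSubgroup_eq_ncard_orbit_mul (S ∪ T) a]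
    exact Nat.mul_le_mul_right _ (Set.ncard_le_card _)

end FixingSubgroup

section EdgesOutside

variable {V : Type*} {G : SimpleGraph V} {S T : Set V}

/-- The edges of `G` that are not contained in `S`, that is, with an endpoint outside `S`. -/
def edgesOutside (G : SimpleGraph V) (S : Set V) : Set (Sym2 V) :=
  {e ∈ G.edgeSet | ¬ ∀ x ∈ e, x ∈ S}

theorem edgesOutside_anti (h : S ⊆ T) : edgesOutside G T ⊆ edgesOutside G S :=
  fun _ he ↦ ⟨he.1, fun hS ↦ he.2 fun x hx ↦ h (hS x hx)⟩

theorem ncard_edgesOutside_lt [Finite V] {a b : V} (hST : S ⊆ T) (hab : G.Adj a b)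
    (haS : a ∉ S) (haT : a ∈ T) (hbT : b ∈ T) :
    (edgesOutside G T).ncard < (edgesOutside G S).ncard := by
  refine Set.ncard_lt_ncard ⟨edgesOutside_anti hST, fun hle ↦ ?_⟩
  have hmem : s(a, b) ∈ edgesOutside G S := ⟨hab, fun h ↦ haS (h a (Sym2.mem_mk_left a b))⟩
  exact (hle hmem).2 (by simp [haT, hbT])

end EdgesOutside

section Components

variable {V : Type*} [Finite V] {G H : SimpleGraph V}

theorem component_insert_induction (C : H.ConnectedComponent) {P : Set V → Prop}
    (base : ∀ S, C.supp ⊆ S → P S)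
    (step : ∀ S, ∀ x ∈ C.supp ∩ S, ∀ y ∈ C.supp \ S, H.Adj x y → P (insert y S) → P S)
    (S : Set V) (hS : (C.supp ∩ S).Nonempty) : P S := by
  induction S using WellFoundedGT.induction with
  | ind S ih =>
  by_cases hCS : C.supp ⊆ S
  · exact base S hCS
  obtain ⟨w, hwC, hwS⟩ := Set.not_subset.1 hCS
  obtain ⟨v, hvC, hvS⟩ := hS
  obtain ⟨p⟩ : H.Reachable v w := C.reachable_of_mem_supp hvC hwC
  obtain ⟨d, -, ⟨hxC, hxS⟩, hy⟩ :=
    p.exists_boundary_dart (C.supp ∩ S) ⟨hvC, hvS⟩ fun hw ↦ hwS hw.2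
  have hyC : d.snd ∈ C.supp := C.mem_supp_of_adj_mem_supp hxC d.adj
  have hyS : d.snd ∉ S := fun h ↦ hy ⟨hyC, h⟩
  exact step S d.fst ⟨hxC, hxS⟩ d.snd ⟨hyC, hyS⟩ d.adj
    (ih _ (Set.ssubset_insert hyS) ⟨v, hvC, Set.mem_insert_of_mem _ hvS⟩)

theorem ncard_diff_add_ncard_edgesOutside_le (hHG : H ≤ G) (C : H.ConnectedComponent)
    (S : Set V) (hS : (C.supp ∩ S).Nonempty) :
    (C.supp \ S).ncard + (edgesOutside G (S ∪ C.supp)).ncard ≤ (edgesOutside G S).ncard := by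
  refine component_insert_induction C (P := fun S ↦ (C.supp \ S).ncard +
    (edgesOutside G (S ∪ C.supp)).ncard ≤ (edgesOutside G S).ncard)
    (fun S hCS ↦ ?_) (fun S x hx y hy hxy ih ↦ ?_) S hS
  · simp [Set.union_eq_self_of_subset_right hCS, Set.sdiff_eq_empty.2 hCS]
  · rw [Set.insert_union, Set.insert_eq_of_mem (Set.mem_union_right S hy.1)] at ih
    have hlt : (edgesOutside G (insert y S)).ncard < (edgesOutside G S).ncard :=
      ncard_edgesOutside_lt (Set.subset_insert y S) (hHG hxy.symm) hy.2 (Set.mem_insert y S)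
        (Set.mem_insert_of_mem y hx.2)
    have := ncard_diff_insert_add_one hy
    omega

end Components

section Deletion

variable {V : Type*} {G : SimpleGraph V} {Y S : Set V}

/-- `G` with every edge meeting `Y` removed, so that the vertices of `Y` become isolated; its
components outside `Y` are those of `G - Y`. Keeping the vertex set `V` lets automorphisms of `G`
act on it without coercions. -/
def isolate (G : SimpleGraph V) (Y : Set V) : SimpleGraph V :=
  (G.induce Yᶜ).spanningCoe

theorem isolate_adj {a b : V} : (isolate G Y).Adj a b ↔ G.Adj a b ∧ a ∉ Y ∧ b ∉ Y := by
  simp [isolate]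

theorem isolate_le : isolate G Y ≤ G := G.spanningCoe_induce_le Yᶜ

theorem disjoint_supp_isolate {v : V} (hv : v ∉ Y) :
    Disjoint ((isolate G Y).connectedComponentMk v).supp Y := by
  refine Set.disjoint_left.2 fun u hu huY ↦ ?_
  obtain ⟨p⟩ : (isolate G Y).Reachable u v := ConnectedComponent.exact hu
  cases p with
  | nil => exact hv huY
  | cons h _ => exact (isolate_adj.1 h).2.1 huY

/-- The automorphism of `isolate G Y` induced by an automorphism of `G` fixing `Y` pointwise. -/
def isolateIso {g : G ≃g G} (hg : g ∈ fixingSubgroup (G ≃g G) Y) : isolate G Y ≃g isolate G Y where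
  toEquiv := g.toEquiv
  map_rel_iff' {a b} := by
    have hY (v : V) : g v ∈ Y ↔ v ∈ Y := smul_mem_iff_of_mem_fixingSubgroup hg
    simp [isolate_adj, hY, g.map_rel_iff]

theorem image_supp_isolate {g : G ≃g G} (hg : g ∈ fixingSubgroup (G ≃g G) Y) (v : V) :
    g '' ((isolate G Y).connectedComponentMk v).supp =
      ((isolate G Y).connectedComponentMk (g v)).supp := by
  ext u
  obtain ⟨w, rfl⟩ := g.surjective u
  rw [g.injective.mem_set_image]
  exact ConnectedComponent.eq.trans
    ((isolateIso hg).reachable_iff.symm.trans ConnectedComponent.eq.symm)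

/-- The components of `G - Y` that meet the orbit of `v` under the automorphisms of `G` fixing `S`
pointwise. -/
def orbitComponents (G : SimpleGraph V) (Y S : Set V) (v : V) :
    Set (isolate G Y).ConnectedComponent :=
  (isolate G Y).connectedComponentMk '' MulAction.orbit (fixingSubgroup (G ≃g G) S) v

theorem ncard_orbit_le_ncard_supp_mul [Finite V] (hYS : Y ⊆ S) (v : V) :
    (MulAction.orbit (fixingSubgroup (G ≃g G) S) v).ncard ≤
      ((isolate G Y).connectedComponentMk v).supp.ncard * (orbitComponents G Y S v).ncard := by
  refine ncard_le_mul_ncard_image (Set.toFinite _) ?_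
  rintro _ ⟨_, ⟨g, rfl⟩, rfl⟩
  have hg : (g : G ≃g G) ∈ fixingSubgroup (G ≃g G) Y := fixingSubgroup_antitone _ _ hYS g.2
  refine (Set.ncard_le_ncard fun u hu ↦ hu.2).trans_eq ?_
  rw [← Set.ncard_image_of_injective _ (g : G ≃g G).injective, image_supp_isolate hg]
  rfl

theorem orbit_subset_of_adj (hYS : Y ⊆ S) {x y : V} (hx : x ∈ S) (hy : y ∉ S)
    (hxy : (isolate G Y).Adj x y) :
    MulAction.orbit (fixingSubgroup (G ≃g G) S) y ⊆ (isolate G Y).neighborSet x \ S := by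
  rintro _ ⟨g, rfl⟩
  have hg : (g : G ≃g G) ∈ fixingSubgroup (G ≃g G) Y := fixingSubgroup_antitone _ _ hYS g.2
  refine ⟨?_, fun h ↦ hy ((smul_mem_iff_of_mem_fixingSubgroup g.2).1 h)⟩
  have := (isolateIso hg).map_rel_iff.2 hxy
  rwa [show isolateIso hg x = x from g.2 ⟨x, hx⟩] at this

theorem card_fixingSubgroup_le_pow_ncard_diff_mul [Finite V] {k : ℕ}
    (hdeg : ∀ u ∉ Y, (G.neighborSet u).ncard ≤ k) (C : (isolate G Y).ConnectedComponent)
    (hYS : Y ⊆ S) (hS : (C.supp ∩ S).Nonempty) :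
    Nat.card (fixingSubgroup (G ≃g G) S) ≤
      k ^ ((C.supp \ S).ncard - 1) * Nat.card (fixingSubgroup (G ≃g G) (S ∪ C.supp)) := by
  -- A vertex adjacent to an already fixed one has at most `k` images. Its images also lie in
  -- `C \ S`, so the last vertex to be fixed is free, whence the `- 1` in the exponent.
  revert hYS
  refine component_insert_induction C (P := fun S ↦ Y ⊆ S → Nat.card (fixingSubgroup (G ≃g G) S) ≤
    k ^ ((C.supp \ S).ncard - 1) * Nat.card (fixingSubgroup (G ≃g G) (S ∪ C.supp)))
    (fun S hCS _ ↦ ?_) (fun S x hx y hy hxy ih hYS ↦ ?_) S hS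
  · simp [Set.union_eq_self_of_subset_right hCS, Set.sdiff_eq_empty.2 hCS]
  rw [Set.insert_union, Set.insert_eq_of_mem (Set.mem_union_right S hy.1)] at ih
  have hsub := orbit_subset_of_adj hYS hx.2 hy.2 hxy
  have horbit_deg : (MulAction.orbit (fixingSubgroup (G ≃g G) S) y).ncard ≤ k :=
    (Set.ncard_le_ncard fun u hu ↦ isolate_le (hsub hu).1).trans (hdeg x (isolate_adj.1 hxy).2.1)
  have horbit_diff : (MulAction.orbit (fixingSubgroup (G ≃g G) S) y).ncard ≤ (C.supp \ S).ncard :=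
    Set.ncard_le_ncard fun u hu ↦ ⟨C.mem_supp_of_adj_mem_supp hx.1 (hsub hu).1, (hsub hu).2⟩
  rw [← ncard_diff_insert_add_one hy] at horbit_diff ⊢
  have horbit_mul : (MulAction.orbit (fixingSubgroup (G ≃g G) S) y).ncard *
      k ^ ((C.supp \ insert y S).ncard - 1) ≤ k ^ (C.supp \ insert y S).ncard := by
    generalize (C.supp \ insert y S).ncard = m at horbit_diff ⊢
    cases m with
    | zero => simpa using horbit_diff
    | succ m => exact (Nat.mul_le_mul_right _ horbit_deg).trans_eq (pow_succ' k m).symm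
  rw [card_fixingSubgroup_eq_ncard_orbit_mul S y, Nat.add_sub_cancel]
  calc _ ≤ (MulAction.orbit (fixingSubgroup (G ≃g G) S) y).ncard *
        (k ^ ((C.supp \ insert y S).ncard - 1) *
          Nat.card (fixingSubgroup (G ≃g G) (S ∪ C.supp))) :=
        Nat.mul_le_mul_left _ (ih (hYS.trans (Set.subset_insert y S)))
    _ ≤ k ^ (C.supp \ insert y S).ncard * Nat.card (fixingSubgroup (G ≃g G) (S ∪ C.supp)) := by
        rw [← mul_assoc]
        exact Nat.mul_le_mul_right _ horbit_mul

theorem card_fixingSubgroup_le_pow_mul_union_supp [Finite V] {k : ℕ} (hk : 0 < k)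
    (hdeg : ∀ u ∉ Y, (G.neighborSet u).ncard ≤ k) (hYS : Y ⊆ S) {v : V}
    (horbit : (orbitComponents G Y S v).ncard ≤ k) :
    Nat.card (fixingSubgroup (G ≃g G) S) ≤
      (2 * k) ^ max (((isolate G Y).connectedComponentMk v).supp.ncard - 1) 1 *
        Nat.card (fixingSubgroup (G ≃g G) (S ∪ ((isolate G Y).connectedComponentMk v).supp)) := by
  set C := (isolate G Y).connectedComponentMk v
  have hvC : v ∈ C.supp := ConnectedComponent.connectedComponentMk_mem
  have hgrow := card_fixingSubgroup_le_pow_ncard_diff_mul hdeg C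
    (hYS.trans (Set.subset_insert v S)) ⟨v, hvC, Set.mem_insert v S⟩
  rw [Set.insert_union, Set.insert_eq_of_mem (Set.mem_union_right S hvC)] at hgrow
  have hrest : (C.supp \ insert v S).ncard - 1 ≤ C.supp.ncard - 2 := by
    have : (C.supp \ insert v S).ncard < C.supp.ncard :=
      Set.ncard_lt_ncard ⟨Set.sdiff_subset, fun h ↦ (h hvC).2 (Set.mem_insert v S)⟩
    omega
  have hroot : C.supp.ncard ≤ 2 ^ max (C.supp.ncard - 1) 1 := by
    have := Nat.lt_two_pow_self (n := max (C.supp.ncard - 1) 1)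
    omega
  rw [card_fixingSubgroup_eq_ncard_orbit_mul S v]
  calc _ ≤ C.supp.ncard * k * (k ^ (C.supp.ncard - 2) *
        Nat.card (fixingSubgroup (G ≃g G) (S ∪ C.supp))) := by
        refine Nat.mul_le_mul ((ncard_orbit_le_ncard_supp_mul hYS v).trans
          (Nat.mul_le_mul_left _ horbit)) (hgrow.trans ?_)
        exact Nat.mul_le_mul_right _ (Nat.pow_le_pow_right hk hrest)
    _ = C.supp.ncard * k ^ max (C.supp.ncard - 1) 1 *
        Nat.card (fixingSubgroup (G ≃g G) (S ∪ C.supp)) := by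
        rw [show max (C.supp.ncard - 1) 1 = C.supp.ncard - 2 + 1 by omega]
        ring
    _ ≤ (2 * k) ^ max (C.supp.ncard - 1) 1 *
        Nat.card (fixingSubgroup (G ≃g G) (S ∪ C.supp)) := by
        rw [mul_pow]
        gcongr

-- A component has at least `|C| - 1` edges; a singleton component still uses up an edge into `Y`.
theorem max_add_ncard_edgesOutside_union_supp_le [Finite V] (hYS : Y ⊆ S) {v x : V}
    (hvx : G.Adj v x) (hvY : v ∉ Y)
    (hdisj : Disjoint ((isolate G Y).connectedComponentMk v).supp S) :
    max (((isolate G Y).connectedComponentMk v).supp.ncard - 1) 1 +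
      (edgesOutside G (S ∪ ((isolate G Y).connectedComponentMk v).supp)).ncard ≤
        (edgesOutside G S).ncard := by
  set C := (isolate G Y).connectedComponentMk v
  have hvC : v ∈ C.supp := ConnectedComponent.connectedComponentMk_mem
  have hvS : v ∉ S := Set.disjoint_left.1 hdisj hvC
  have hxSC : x ∈ S ∪ C.supp := by
    by_cases hxY : x ∈ Y
    · exact .inl (hYS hxY)
    · exact .inr (C.mem_supp_of_adj_mem_supp hvC (isolate_adj.2 ⟨hvx, hvY, hxY⟩))
  have hlt : (edgesOutside G (S ∪ C.supp)).ncard < (edgesOutside G S).ncard :=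
    ncard_edgesOutside_lt Set.subset_union_left hvx hvS (.inr hvC) hxSC
  have hgrow := ncard_diff_add_ncard_edgesOutside_le isolate_le C (insert v S)
    ⟨v, hvC, Set.mem_insert v S⟩
  rw [Set.insert_union, Set.insert_eq_of_mem (Set.mem_union_right S hvC)] at hgrow
  have hcard := ncard_diff_insert_add_one (A := C.supp) (S := S) ⟨hvC, hvS⟩
  rw [hdisj.sdiff_eq_left] at hcard
  have hanti : (edgesOutside G (insert v S)).ncard ≤ (edgesOutside G S).ncard :=
    Set.ncard_le_ncard (edgesOutside_anti (Set.subset_insert v S))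
  omega

theorem card_fixingSubgroup_le_pow_ncard_edgesOutside [Finite V] {k : ℕ} (hk : 0 < k)
    (hdeg : ∀ u ∉ Y, (G.neighborSet u).ncard ≤ k) (hiso : ∀ v ∉ Y, ∃ x, G.Adj v x)
    (horbit : ∀ S, Y ⊆ S → ∀ v ∉ Y, (orbitComponents G Y S v).ncard ≤ k) (hYS : Y ⊆ S)
    (hS : ∀ C : (isolate G Y).ConnectedComponent, ¬ Disjoint C.supp S → C.supp ⊆ S) :
    Nat.card (fixingSubgroup (G ≃g G) S) ≤ (2 * k) ^ (edgesOutside G S).ncard := by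
  induction S using WellFoundedGT.induction with
  | ind S ih =>
  by_cases huniv : ∀ v, v ∈ S
  · have : Subsingleton (fixingSubgroup (G ≃g G) S) :=
      ⟨fun g h ↦ Subtype.ext (RelIso.ext fun v ↦ (g.2 ⟨v, huniv v⟩).trans (h.2 ⟨v, huniv v⟩).symm)⟩
    exact (Finite.card_le_one_iff_subsingleton.2 this).trans (Nat.one_le_pow _ _ (by omega))
  obtain ⟨v, hvS⟩ := not_forall.1 huniv
  have hvY : v ∉ Y := fun h ↦ hvS (hYS h)
  obtain ⟨x, hvx⟩ := hiso v hvY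
  set C := (isolate G Y).connectedComponentMk v
  have hvC : v ∈ C.supp := ConnectedComponent.connectedComponentMk_mem
  have hdisj : Disjoint C.supp S := by_contra fun h ↦ hvS (hS C h hvC)
  have hS' : ∀ D : (isolate G Y).ConnectedComponent,
      ¬ Disjoint D.supp (S ∪ C.supp) → D.supp ⊆ S ∪ C.supp := fun D hD ↦ by
    rw [Set.disjoint_union_right, not_and_or] at hD
    obtain hDS | hDC := hD
    · exact (hS D hDS).trans Set.subset_union_left
    · obtain ⟨u, huD, huC⟩ := Set.not_disjoint_iff.1 hDC
      exact (ConnectedComponent.eq_of_common_vertex huD huC) ▸ Set.subset_union_right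
  calc Nat.card (fixingSubgroup (G ≃g G) S)
    _ ≤ (2 * k) ^ max (C.supp.ncard - 1) 1 * Nat.card (fixingSubgroup (G ≃g G) (S ∪ C.supp)) :=
        card_fixingSubgroup_le_pow_mul_union_supp hk hdeg hYS (horbit S hYS v hvY)
    _ ≤ (2 * k) ^ max (C.supp.ncard - 1) 1 *
          (2 * k) ^ (edgesOutside G (S ∪ C.supp)).ncard := by
        refine Nat.mul_le_mul_left _ (ih _ ?_ (hYS.trans Set.subset_union_left) hS')
        exact ⟨Set.subset_union_left, fun h ↦ hvS (h (.inr hvC))⟩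
    _ ≤ (2 * k) ^ (edgesOutside G S).ncard := by
        rw [← pow_add]
        exact Nat.pow_le_pow_right (by omega)
          (max_add_ncard_edgesOutside_union_supp_le hYS hvx hvY hdisj)

theorem mem_supp_isolate_of_adj (C : (isolate G Y).ConnectedComponent) (hCY : Disjoint C.supp Y)
    {a b : V} (ha : a ∈ C.supp) (hab : G.Adj a b) (hb : b ∉ Y) : b ∈ C.supp :=
  C.mem_supp_of_adj_mem_supp ha (isolate_adj.2 ⟨hab, Set.disjoint_left.1 hCY ha, hb⟩)

theorem exists_perm_adj_iff_of_image_supp_eq [Finite V] {C D : (isolate G Y).ConnectedComponent}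
    {g : G ≃g G} (hg : g ∈ fixingSubgroup (G ≃g G) Y) (hgCD : g '' C.supp = D.supp) {U : Set V}
    (hYU : Y ⊆ U) (hCU : Disjoint C.supp U) (hDU : Disjoint D.supp U) :
    ∃ σ : Equiv.Perm V, σ '' C.supp = D.supp ∧ (∀ v ∈ U, σ v = v) ∧
      ∀ a b, G.Adj a b ∧ (a ∈ C.supp ∨ b ∈ C.supp) ↔
        G.Adj (σ a) (σ b) ∧ (σ a ∈ D.supp ∨ σ b ∈ D.supp) := by
  -- `g` need not fix `U \ Y`, so only its restriction to `C` is kept.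
  obtain ⟨σ, hσC, hσU⟩ := exists_perm_eqOn g.toEquiv hCU (by simpa [hgCD] using hDU)
  have hσCD : σ '' C.supp = D.supp := hσC.image_eq.trans hgCD
  have hσ_mem (a : V) : σ a ∈ D.supp ↔ a ∈ C.supp := by
    rw [← hσCD, σ.injective.mem_set_image]
  have hσY {v : V} (hv : σ v ∈ Y) : v ∈ Y := by
    rwa [← σ.injective (hσU _ (hYU hv))]
  have hadj (a b : V) (ha : a ∈ C.supp) : G.Adj a b ↔ G.Adj (σ a) (σ b) := by
    by_cases hb : b ∈ C.supp ∪ Y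
    · have hσb : σ b = g b :=
        hb.elim (fun hbC ↦ hσC hbC) fun hbY ↦ (hσU b (hYU hbY)).trans (hg ⟨b, hbY⟩).symm
      rw [hσb, hσC ha]
      exact g.map_rel_iff.symm
    · rw [Set.mem_union, not_or] at hb
      refine iff_of_false (fun h ↦ hb.1 ?_) (fun h ↦ hb.1 ?_)
      · exact mem_supp_isolate_of_adj C (hCU.mono_right hYU) ha h hb.2
      · exact (hσ_mem b).1 (mem_supp_isolate_of_adj D (hDU.mono_right hYU)
          ((hσ_mem a).2 ha) h fun hbY ↦ hb.2 (hσY hbY))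
  refine ⟨σ, hσCD, hσU, fun a b ↦ ?_⟩
  rw [hσ_mem, hσ_mem]
  refine and_congr_left fun hab ↦ ?_
  obtain ha | hb := hab
  · exact hadj a b ha
  · rw [G.adj_comm, hadj b a hb, G.adj_comm]

end Deletion

section HighDegree

variable {V : Type*} [Finite V] {G : SimpleGraph V}

theorem pow_ncard_le_sq_pow_ncard_edgeSet {b n : ℕ} (hb : 0 < b) {T : Set V}
    (hT : ∀ v ∈ T, n ≤ b ^ (G.neighborSet v).ncard) :
    n ^ T.ncard ≤ (b ^ 2) ^ G.edgeSet.ncard := by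
  classical
  have := Fintype.ofFinite V
  have hdeg (v : V) : (G.neighborSet v).ncard = G.degree v := by
    rw [Set.ncard_eq_toFinset_card', ← neighborFinset, card_neighborFinset_eq_degree]
  calc n ^ T.ncard = ∏ _v ∈ T.toFinset, n := by
        rw [Finset.prod_const, Set.ncard_eq_toFinset_card']
    _ ≤ ∏ v ∈ T.toFinset, b ^ G.degree v :=
        Finset.prod_le_prod' fun v hv ↦ hdeg v ▸ hT v (Set.mem_toFinset.1 hv)
    _ = b ^ ∑ v ∈ T.toFinset, G.degree v := Finset.prod_pow_eq_pow_sum _ _ _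
    _ ≤ b ^ ∑ v, G.degree v :=
        Nat.pow_le_pow_right hb (Finset.sum_le_sum_of_subset (Finset.subset_univ _))
    _ = (b ^ 2) ^ G.edgeSet.ncard := by
        rw [sum_degrees_eq_twice_card_edges, pow_mul, Set.ncard_eq_toFinset_card', edgeFinset]

theorem card_fixingSubgroup_le_eight_mul_pow_ncard_edgeSet {S : Set V} {k : ℕ} (hk : 0 < k)
    (hcard : Nat.card V ≤ 2 ^ k) (hiso : ∀ v ∉ S, ∃ x, G.Adj v x)
    (horbit : ∀ Y T, S ⊆ Y → Y ⊆ T → ∀ v ∉ Y, (orbitComponents G Y T v).ncard ≤ k) :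
    Nat.card (fixingSubgroup (G ≃g G) S) ≤ (8 * k) ^ G.edgeSet.ncard := by
  let T : Set V := {v | Nat.card V ≤ 2 ^ (G.neighborSet v).ncard}
  let Y : Set V := S ∪ T
  have hSY : S ⊆ Y := Set.subset_union_left
  have hdeg : ∀ u ∉ Y, (G.neighborSet u).ncard ≤ k := fun u hu ↦ by
    have hlt : 2 ^ (G.neighborSet u).ncard < Nat.card V := not_le.1 fun h ↦ hu (.inr h)
    exact ((Nat.pow_lt_pow_iff_right one_lt_two).1 (hlt.trans_le hcard)).le
  have hclosed : ∀ C : (isolate G Y).ConnectedComponent, ¬ Disjoint C.supp Y → C.supp ⊆ Y := by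
    intro C hC v hv
    by_contra hvY
    exact hC (hv ▸ disjoint_supp_isolate hvY)
  calc _ ≤ Nat.card V ^ T.ncard * Nat.card (fixingSubgroup (G ≃g G) Y) :=
        card_fixingSubgroup_le_pow_ncard_mul S T
    _ ≤ (2 ^ 2) ^ G.edgeSet.ncard * (2 * k) ^ (edgesOutside G Y).ncard :=
        Nat.mul_le_mul (pow_ncard_le_sq_pow_ncard_edgeSet two_pos fun v hv ↦ hv)
          (card_fixingSubgroup_le_pow_ncard_edgesOutside hk hdeg
            (fun v hv ↦ hiso v fun h ↦ hv (hSY h)) (fun T ↦ horbit Y T hSY) le_rfl hclosed)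
    _ ≤ (2 ^ 2) ^ G.edgeSet.ncard * (2 * k) ^ G.edgeSet.ncard :=
        Nat.mul_le_mul_left _ (Nat.pow_le_pow_right (by omega)
          (Set.ncard_le_ncard fun e he ↦ he.1))
    _ = (8 * k) ^ G.edgeSet.ncard := by
        rw [← mul_pow, ← mul_assoc]
        rfl

end HighDegree

section RootedGraph

variable {V : Type} {J : SimpleGraph V} {W Z : Finset V}

theorem mk_mem_rootedEdges {a b : V} :
    s(a, b) ∈ rootedEdges J W Z ↔ J.Adj a b ∧ (a ∈ Z ∧ b ∈ Z) ∧ ¬ (a ∈ W ∧ b ∈ W) := by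
  simp only [rootedEdges, Set.mem_ofPred_eq, mem_edgeSet, Sym2.ball]

/-- The rooted graph `J[W,Z]`, on the whole ground set: vertices outside `Z` are isolated. -/
def rootedGraph (J : SimpleGraph V) (W Z : Finset V) : SimpleGraph V :=
  fromEdgeSet (rootedEdges J W Z)

theorem rootedGraph_adj {a b : V} : (rootedGraph J W Z).Adj a b ↔ s(a, b) ∈ rootedEdges J W Z :=
  (fromEdgeSet_adj _).trans (and_iff_left_of_imp fun h ↦ (mk_mem_rootedEdges.1 h).1.ne)

theorem edgeSet_rootedGraph : (rootedGraph J W Z).edgeSet = rootedEdges J W Z :=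
  Set.ext fun e ↦ e.ind fun _ _ ↦ rootedGraph_adj

theorem autWZ_eq_card_fixingSubgroup :
    autWZ J W Z = Nat.card (fixingSubgroup (rootedGraph J W Z ≃g rootedGraph J W Z)
      (W ∪ (Z : Set V)ᶜ)) := by
  refine Nat.card_congr
    { toFun := fun σ ↦ ⟨⟨σ, fun {a b} ↦ ?_⟩, ?_⟩
      invFun := fun g ↦ ⟨g.1.toEquiv, fun v hv ↦ g.2 ⟨v, .inl hv⟩, fun v hv ↦ g.2 ⟨v, .inr hv⟩, ?_⟩
      left_inv := fun _ ↦ rfl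
      right_inv := fun _ ↦ rfl }
  · rw [rootedGraph_adj, rootedGraph_adj]
    exact (σ.2.2.2 s(a, b)).symm
  · rintro ⟨v, hv | hv⟩
    · exact σ.2.1 v hv
    · exact σ.2.2.1 v hv
  · refine Sym2.ind fun a b ↦ ?_
    rw [Sym2.map_mk, ← rootedGraph_adj, ← rootedGraph_adj]
    exact g.1.map_rel_iff.symm

variable [DecidableEq V] {k : ℕ}

theorem mk_mem_rootedEdges_core_union_petal {P : Fin k → Finset V} (hPZW : ∀ i, P i ⊆ Z \ W)
    (hP : ∀ i j, i ≠ j → ∀ u ∈ P i, ∀ v ∈ P j, ¬ J.Adj u v) (i : Fin k) (a b : V) :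
    s(a, b) ∈ rootedEdges J (Z \ Finset.univ.biUnion P) ((Z \ Finset.univ.biUnion P) ∪ P i) ↔
      (rootedGraph J W Z).Adj a b ∧ (a ∈ P i ∨ b ∈ P i) := by
  have hpetal {u : V} (hu : u ∈ P i) :
      u ∉ Z \ Finset.univ.biUnion P ∧ u ∈ Z ∧ u ∉ W :=
    ⟨fun h ↦ (Finset.mem_sdiff.1 h).2 (Finset.mem_biUnion.2 ⟨i, Finset.mem_univ i, hu⟩),
      Finset.mem_sdiff.1 (hPZW i hu)⟩
  have hneighbor {u v : V} (hu : u ∈ P i) (huv : J.Adj u v) :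
      v ∈ (Z \ Finset.univ.biUnion P) ∪ P i ↔ v ∈ Z := by
    refine ⟨fun h ↦ ?_, fun hv ↦ ?_⟩
    · exact Finset.union_subset Finset.sdiff_subset ((hPZW i).trans Finset.sdiff_subset) h
    · by_contra h
      simp only [Finset.mem_union, Finset.mem_sdiff, Finset.mem_biUnion, Finset.mem_univ,
        true_and, not_or, not_and, not_not] at h
      obtain ⟨l, hl⟩ := h.1 hv
      exact hP i l (fun hil ↦ h.2 (hil ▸ hl)) u hu v hl huv
  rw [rootedGraph_adj, mk_mem_rootedEdges, mk_mem_rootedEdges]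
  refine ⟨fun ⟨hab, ⟨ha, hb⟩, hcore⟩ ↦ ?_, fun ⟨⟨hab, ⟨haZ, hbZ⟩, _⟩, hor⟩ ↦ ?_⟩
  · obtain haP | hbP : a ∈ P i ∨ b ∈ P i := by
      by_contra! h
      exact hcore ⟨(Finset.mem_union.1 ha).resolve_right h.1,
        (Finset.mem_union.1 hb).resolve_right h.2⟩
    · exact ⟨⟨hab, ⟨(hpetal haP).2.1, (hneighbor haP hab).1 hb⟩,
        fun h ↦ (hpetal haP).2.2 h.1⟩, .inl haP⟩
    · exact ⟨⟨hab, ⟨(hneighbor hbP hab.symm).1 ha, (hpetal hbP).2.1⟩,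
        fun h ↦ (hpetal hbP).2.2 h.2⟩, .inr hbP⟩
  · obtain haP | hbP := hor
    · exact ⟨hab, ⟨Finset.mem_union_right _ haP, (hneighbor haP hab).2 hbZ⟩,
        fun h ↦ (hpetal haP).1 h.1⟩
    · exact ⟨hab, ⟨(hneighbor hbP hab.symm).2 haZ, Finset.mem_union_right _ hbP⟩,
        fun h ↦ (hpetal hbP).1 h.2⟩

theorem isSunflower_of_components [Finite V] {Y : Set V} (hY : (W : Set V) ∪ (Z : Set V)ᶜ ⊆ Y)
    {C : Fin k → (isolate (rootedGraph J W Z) Y).ConnectedComponent} (hC : Function.Injective C)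
    (hCY : ∀ i, Disjoint (C i).supp Y)
    (hiso : ∀ i j, ∃ g ∈ fixingSubgroup (rootedGraph J W Z ≃g rootedGraph J W Z) Y,
      g '' (C i).supp = (C j).supp)
    {P : Fin k → Finset V} (hP : ∀ i, (P i : Set V) = (C i).supp) : IsSunflower J W Z P := by
  have hmem {i : Fin k} {v : V} : v ∈ P i ↔ v ∈ (C i).supp := by
    rw [← Finset.mem_coe, hP]
  have hPZW (i : Fin k) : P i ⊆ Z \ W := fun v hv ↦ by
    have hvY : v ∉ Y := Set.disjoint_left.1 (hCY i) (hmem.1 hv)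
    exact Finset.mem_sdiff.2 ⟨by_contra fun h ↦ hvY (hY (.inr h)), fun h ↦ hvY (hY (.inl h))⟩
  have hindex {i j : Fin k} {v : V} (hi : v ∈ P i) (hj : v ∈ P j) : i = j :=
    hC (ConnectedComponent.eq_of_common_vertex (hmem.1 hi) (hmem.1 hj))
  have hnoEdge (i j : Fin k) (hij : i ≠ j) (u : V) (hu : u ∈ P i) (v : V) (hv : v ∈ P j) :
      ¬ J.Adj u v := fun huv ↦ by
    obtain ⟨huZ, huW⟩ := Finset.mem_sdiff.1 (hPZW i hu)
    have hvZ : v ∈ Z := (Finset.mem_sdiff.1 (hPZW j hv)).1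
    have hadj : (rootedGraph J W Z).Adj u v :=
      rootedGraph_adj.2 (mk_mem_rootedEdges.2 ⟨huv, ⟨huZ, hvZ⟩, fun h ↦ huW h.1⟩)
    exact hij (hindex (hmem.2 (mem_supp_isolate_of_adj (C i) (hCY i) (hmem.1 hu) hadj
      (Set.disjoint_left.1 (hCY j) (hmem.1 hv)))) hv)
  refine ⟨fun i ↦ ⟨?_, hPZW i⟩, fun i j hij ↦ ?_, hnoEdge, fun i j ↦ ?_⟩
  · rw [← Finset.coe_nonempty, hP]
    exact (C i).nonempty_supp
  · exact Finset.disjoint_left.2 fun v hi hj ↦ hij (hindex hi hj)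
  · obtain ⟨g, hg, hgij⟩ := hiso i j
    have hdisj (l : Fin k) : Disjoint (C l).supp (⋃ m, (C m).supp)ᶜ :=
      Set.disjoint_compl_right_iff_subset.2 (Set.subset_iUnion (fun m ↦ (C m).supp) l)
    obtain ⟨σ, hσ_image, hσ_fix, hσ_adj⟩ := exists_perm_adj_iff_of_image_supp_eq hg hgij
      (Set.subset_compl_comm.1 (Set.iUnion_subset fun l ↦ (hCY l).subset_compl_right))
      (hdisj i) (hdisj j)
    refine ⟨σ, fun v hv ↦ hσ_fix v ?_, ?_, Sym2.ind fun a b ↦ ?_⟩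
    · simpa [hmem] using (Finset.mem_sdiff.1 hv).2
    · rw [← Finset.coe_inj, Finset.coe_image, hP, hP, hσ_image]
    · rw [Sym2.map_mk, mk_mem_rootedEdges_core_union_petal hPZW hnoEdge,
        mk_mem_rootedEdges_core_union_petal hPZW hnoEdge, hmem, hmem, hmem, hmem]
      exact hσ_adj a b

theorem exists_isSunflower_of_le_ncard_orbitComponents [Finite V] {Y S : Set V}
    (hY : (W : Set V) ∪ (Z : Set V)ᶜ ⊆ Y) (hYS : Y ⊆ S) {v : V} (hv : v ∉ Y)
    (hk : k ≤ (orbitComponents (rootedGraph J W Z) Y S v).ncard) :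
    ∃ P : Fin k → Finset V, IsSunflower J W Z P := by
  have := Fintype.ofFinite (orbitComponents (rootedGraph J W Z) Y S v)
  obtain ⟨C⟩ : Nonempty (Fin k ↪ orbitComponents (rootedGraph J W Z) Y S v) :=
    Function.Embedding.nonempty_of_card_le (by
      rwa [Fintype.card_fin, ← Nat.card_eq_fintype_card, Nat.card_coe_set_eq])
  have hC (i : Fin k) : ∃ g ∈ fixingSubgroup (rootedGraph J W Z ≃g rootedGraph J W Z) Y,
      (C i).1 = (isolate (rootedGraph J W Z) Y).connectedComponentMk (g v) := by
    obtain ⟨_, ⟨g, rfl⟩, hgC⟩ := (C i).2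
    exact ⟨g, fixingSubgroup_antitone _ _ hYS g.2, hgC.symm⟩
  choose g hg hgC using hC
  refine ⟨fun i ↦ (C i).1.supp.toFinite.toFinset,
    isSunflower_of_components hY (Subtype.val_injective.comp C.injective) (fun i ↦ ?_)
      (fun i j ↦ ⟨g j * (g i)⁻¹, mul_mem (hg j) (inv_mem (hg i)), ?_⟩)
      fun i ↦ Set.Finite.coe_toFinset _⟩
  · rw [Function.comp_apply, hgC i]
    exact disjoint_supp_isolate fun h ↦ hv ((smul_mem_iff_of_mem_fixingSubgroup (hg i)).1 h)
  · rw [Function.comp_apply, Function.comp_apply, hgC i, hgC j,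
      image_supp_isolate (mul_mem (hg j) (inv_mem (hg i)))]
    simp [RelIso.mul_apply]

end RootedGraph

end SunflowerAut

open SunflowerAut in
theorem aut_bound_no_sunflower_general {V : Type} [Finite V] [DecidableEq V] (J : SimpleGraph V)
    (W Z : Finset V) (k : ℕ) (hk : Nat.card V ≤ 2 ^ k)
    (hsun : ¬ ∃ P : Fin k → Finset V, IsSunflower J W Z P)
    (hiso : ∀ v ∈ Z \ W, ∃ e ∈ rootedEdges J W Z, v ∈ e) :
    autWZ J W Z ≤ (8 * k) ^ eWZ J W Z := by
  have hk_pos : 0 < k := by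
    rw [Nat.pos_iff_ne_zero]
    rintro rfl
    exact hsun ⟨Fin.elim0, by simp [IsSunflower]⟩
  rw [autWZ_eq_card_fixingSubgroup, eWZ, ← edgeSet_rootedGraph, Nat.card_coe_set_eq]
  refine card_fixingSubgroup_le_eight_mul_pow_ncard_edgeSet hk_pos hk (fun v hv ↦ ?_)
    fun Y T hY hYT v hv ↦ ?_
  · simp only [Set.mem_union, Set.mem_compl_iff, Finset.mem_coe, not_or, not_not] at hv
    obtain ⟨e, he, hve⟩ := hiso v (Finset.mem_sdiff.2 hv.symm)
    obtain ⟨x, rfl⟩ := hve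
    exact ⟨x, rootedGraph_adj.2 he⟩
  · by_contra! hlt
    exact hsun (exists_isSunflower_of_le_ncard_orbitComponents hY hYT hv hlt.le)

/-- Lemma 4.3: if `k ≥ 4 log₂ n`, `J[W,Z]` has no `k`-sunflower, and no vertex of
`Z \ W` is isolated in `J[W,Z]`, then `aut(W,Z) ≤ (16k)^{e(W,Z)}`. -/
theorem aut_bound_no_sunflower {n : ℕ} (J : SimpleGraph (Fin n)) (W Z : Finset (Fin n))
    (hWZ : W ⊂ Z) (k : ℕ) (hk : 4 * Real.logb 2 n ≤ k)
    (hsun : ¬ ∃ P : Fin k → Finset (Fin n), IsSunflower J W Z P)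
    (hiso : ∀ v ∈ Z \ W, ∃ e ∈ rootedEdges J W Z, v ∈ e) :
    autWZ J W Z ≤ (16 * k) ^ (eWZ J W Z) := by
  have hlog_nonneg : 0 ≤ Real.logb 2 n :=
    div_nonneg (Real.log_natCast_nonneg n) (Real.log_nonneg one_le_two)
  have hcard : n ≤ 2 ^ k :=
    SunflowerAut.le_pow_of_logb_le one_lt_two (by push_cast; linarith only [hk, hlog_nonneg])
  exact (aut_bound_no_sunflower_general J W Z k (by rwa [Nat.card_fin]) hsun hiso).trans
    (Nat.pow_le_pow_left (by omega) _)
end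

section
/- If J is r-leading at [W,Z] and (r/2)-sparse, then aut(W,Z) ≤ min{v(W,Z), 16 log₂ n}^{e(W,Z)}. -/
open SimpleGraph

/-!
Write `L = log₂ n`. For `W ⊊ Y ⊊ Z`, the graph formed by the edges of `J[Y,Z]` has at least
`aut(Y,Z)` automorphisms, so comparing its sparsity with `μ_r(Y,Z) < 1` gives
`2 ^ e(Y,Z) < n ^ b(Y,Z)`, where `b(Y,Z)` is the number of vertices of `Y` with a neighbour in
`Z \ Y`; that is, `e(Y,Z) < b(Y,Z) L`. Averaging the degrees of these `b(Y,Z)` vertices, one of them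
has at most `L` neighbours in `Z \ Y`. Since it is fixed by `Aut(Y,Z)`, its neighbourhood in `Z \ Y`
is a union of orbits, one of which therefore has size at most `L`. Fixing a point of that orbit and
iterating gives `aut(Y,Z) ≤ L ^ v(Y,Z)`.

For `Y = W` the leading condition says nothing, but adding one vertex to `W` changes the edge count
by at most `b(W,Z)` and the boundary by at most one vertex, so `e(W,Z) ≤ (b(W,Z) + 1) L + b(W,Z)`.
If `b(W,Z) > 0` this is at most `3 b(W,Z) L`, so the first orbit has size at most `3L`, and
`v(W,Z) ≤ e(W,Z)`. If `b(W,Z) = 0`, then `v(W,Z) ≤ e(W,Z) + 1 ≤ 3L`, and the trivial bound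
`v! ≤ v ^ (v - 1)` suffices.
-/

open Finset

section RootedEdges

variable {V : Type} {J : SimpleGraph V} {W Y Z : Finset V}

lemma mk_mem_rootedEdges {a b : V} :
    s(a, b) ∈ rootedEdges J W Z ↔ J.Adj a b ∧ (a ∈ Z ∧ b ∈ Z) ∧ (a ∉ W ∨ b ∉ W) := by
  simp only [rootedEdges, Set.mem_ofPred_eq, mem_edgeSet, Sym2.ball, not_and_or]

lemma finite_rootedEdges (J : SimpleGraph V) (W Z : Finset V) : (rootedEdges J W Z).Finite :=
  Z.sym2.finite_toSet.subset fun _ he ↦ mem_sym2_iff.2 he.2.1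

lemma rootedEdges_anti_left (hWY : W ⊆ Y) : rootedEdges J Y Z ⊆ rootedEdges J W Z :=
  fun _ ⟨hadj, hZ, hY⟩ ↦ ⟨hadj, hZ, fun hW ↦ hY fun x hx ↦ hWY (hW x hx)⟩

lemma eWZ_anti_left (hWY : W ⊆ Y) : eWZ J Y Z ≤ eWZ J W Z :=
  Nat.card_mono (finite_rootedEdges J W Z) (rootedEdges_anti_left hWY)

@[simp]
lemma eWZ_self (J : SimpleGraph V) (Z : Finset V) : eWZ J Z Z = 0 :=
  Nat.card_eq_zero.2 (.inl ⟨fun ⟨_, _, hZ, hZ'⟩ ↦ hZ' hZ⟩)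

lemma one_lt_card_of_eWZ_ne_zero (he : eWZ J W Z ≠ 0) : 1 < #Z := by
  obtain ⟨⟨e, he⟩⟩ := (Nat.card_ne_zero.1 he).1
  induction e with | _ a b
  obtain ⟨hab, ⟨ha, hb⟩, -⟩ := mk_mem_rootedEdges.1 he
  exact one_lt_card.2 ⟨a, ha, b, hb, hab.ne⟩

end RootedEdges

section Boundary

open Classical in
/-- The roots of `J[Y,Z]` incident with one of its edges: the vertices of `Y` that have a neighbour
in `Z \ Y`. -/
noncomputable def rootBoundary {V : Type} (J : SimpleGraph V) (Y Z : Finset V) : Finset V :=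
  {u ∈ Y | ∃ x ∈ Z, x ∉ Y ∧ J.Adj u x}

/-- Every `J[Y,Z]` with `W ⊊ Y ⊊ Z` has fewer than `L` edges per boundary vertex. This is what the
leading and sparsity conditions give for `L = log₂ n`. -/
def BoundaryExpanding {V : Type} (L : ℝ) (J : SimpleGraph V) (W Z : Finset V) : Prop :=
  ∀ Y, W ⊂ Y → Y ⊂ Z → eWZ J Y Z < #(rootBoundary J Y Z) * L

variable {V : Type} {J : SimpleGraph V} {W Y Z : Finset V} {L : ℝ}

@[simp]
lemma rootBoundary_self (J : SimpleGraph V) (Z : Finset V) : rootBoundary J Z Z = ∅ := by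
  simp +contextual [rootBoundary]

lemma BoundaryExpanding.rootBoundary_nonempty (h : BoundaryExpanding L J W Z) (hWY : W ⊂ Y)
    (hYZ : Y ⊂ Z) : (rootBoundary J Y Z).Nonempty := by
  by_contra hempty
  have hlt := h Y hWY hYZ
  rw [not_nonempty_iff_eq_empty.1 hempty, card_empty, Nat.cast_zero, zero_mul] at hlt
  exact hlt.not_ge (Nat.cast_nonneg _)

lemma BoundaryExpanding.eWZ_le (h : BoundaryExpanding L J W Z) (hWY : W ⊂ Y) (hYZ : Y ⊆ Z) :
    eWZ J Y Z ≤ #(rootBoundary J Y Z) * L := by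
  obtain rfl | hYZ := hYZ.eq_or_ssubset
  · simp
  · exact (h Y hWY hYZ).le

variable [DecidableEq V]

lemma mem_rootBoundary {u : V} : u ∈ rootBoundary J Y Z ↔ u ∈ Y ∧ ∃ x ∈ Z \ Y, J.Adj u x := by
  simp [rootBoundary, and_assoc]

lemma eWZ_insert_lt {u x : V} (hYZ : Y ⊆ Z) (hu : u ∈ Y) (hx : x ∈ Z \ Y) (hux : J.Adj u x) :
    eWZ J (insert x Y) Z < eWZ J Y Z := by
  rw [mem_sdiff] at hx
  refine Set.ncard_lt_ncard ⟨rootedEdges_anti_left (subset_insert x Y), fun hsub ↦ ?_⟩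
    (finite_rootedEdges J Y Z)
  have hmem := hsub (mk_mem_rootedEdges.2 ⟨hux, ⟨hYZ hu, hx.1⟩, .inr hx.2⟩)
  simp [mk_mem_rootedEdges, hu] at hmem

lemma card_sdiff_insert_add_one {x : V} (hx : x ∈ Z \ Y) :
    #(Z \ insert x Y) + 1 = #(Z \ Y) := by
  rw [sdiff_insert, card_erase_add_one hx]

lemma BoundaryExpanding.card_sdiff_le_eWZ (h : BoundaryExpanding L J W Z) (hWY : W ⊂ Y)
    (hYZ : Y ⊆ Z) : #(Z \ Y) ≤ eWZ J Y Z := by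
  induction hk : #(Z \ Y) generalizing Y with
  | zero => exact Nat.zero_le _
  | succ k ih =>
    have hYZ' : Y ⊂ Z := hYZ.ssubset_of_ne (by rintro rfl; simp at hk)
    obtain ⟨u, hu⟩ := h.rootBoundary_nonempty hWY hYZ'
    obtain ⟨huY, x, hx, hux⟩ := mem_rootBoundary.1 hu
    have hcard := card_sdiff_insert_add_one hx
    have hle := ih (hWY.trans_subset (subset_insert x Y))
      (insert_subset (mem_sdiff.1 hx).1 hYZ) (by lia)
    exact hle.trans_lt (eWZ_insert_lt hYZ huY hx hux)

lemma BoundaryExpanding.card_sdiff_root_le_eWZ_insert (h : BoundaryExpanding L J W Z) (hWZ : W ⊆ Z)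
    {x : V} (hx : x ∈ Z \ W) : #(Z \ W) ≤ eWZ J (insert x W) Z + 1 := by
  rw [mem_sdiff] at hx
  rw [← card_sdiff_insert_add_one (mem_sdiff.2 hx)]
  exact Nat.succ_le_succ <| h.card_sdiff_le_eWZ (ssubset_insert hx.2) (insert_subset hx.1 hWZ)

lemma BoundaryExpanding.card_sdiff_root_le_eWZ_add_one (h : BoundaryExpanding L J W Z)
    (hWZ : W ⊂ Z) : #(Z \ W) ≤ eWZ J W Z + 1 := by
  obtain ⟨x, hx⟩ := sdiff_nonempty.2 hWZ.not_subset
  exact (h.card_sdiff_root_le_eWZ_insert hWZ.subset hx).trans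
    (Nat.succ_le_succ (eWZ_anti_left (subset_insert x W)))

lemma BoundaryExpanding.card_sdiff_root_le_eWZ (h : BoundaryExpanding L J W Z) (hWZ : W ⊆ Z)
    (hne : (rootBoundary J W Z).Nonempty) : #(Z \ W) ≤ eWZ J W Z := by
  obtain ⟨u, hu⟩ := hne
  obtain ⟨huW, x, hx, hux⟩ := mem_rootBoundary.1 hu
  exact (h.card_sdiff_root_le_eWZ_insert hWZ hx).trans (eWZ_insert_lt hWZ huW hx hux)

lemma eWZ_le_eWZ_insert_add_card_rootBoundary {x : V} (hx : x ∈ Z \ Y) :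
    eWZ J Y Z ≤ eWZ J (insert x Y) Z + #(rootBoundary J Y Z) := by
  have hsub : rootedEdges J Y Z ⊆
      rootedEdges J (insert x Y) Z ∪ (rootBoundary J Y Z).image (s(x, ·)) := by
    intro e he
    induction e with | _ a b
    obtain ⟨hab, hZ, hY⟩ := mk_mem_rootedEdges.1 he
    by_cases hnew : a ∉ insert x Y ∨ b ∉ insert x Y
    · exact .inl (mk_mem_rootedEdges.2 ⟨hab, hZ, hnew⟩)
    right
    push Not at hnew
    rw [mem_insert, mem_insert] at hnew
    simp only [coe_image, Set.mem_image, mem_coe, mem_rootBoundary]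
    rcases hnew with ⟨rfl | ha, rfl | hb⟩
    · exact absurd hab J.irrefl
    · exact ⟨b, ⟨hb, a, hx, hab.symm⟩, rfl⟩
    · exact ⟨a, ⟨ha, b, hx, hab⟩, Sym2.eq_swap⟩
    · exact absurd hY (by simp [ha, hb])
  calc eWZ J Y Z
    _ ≤ (rootedEdges J (insert x Y) Z ∪ (rootBoundary J Y Z).image (s(x, ·)) : Set _).ncard :=
      Set.ncard_le_ncard hsub ((finite_rootedEdges J _ Z).union (finite_toSet _))
    _ ≤ eWZ J (insert x Y) Z + #((rootBoundary J Y Z).image (s(x, ·))) := by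
      grw [Set.ncard_union_le, Set.ncard_coe_finset]; rfl
    _ ≤ eWZ J (insert x Y) Z + #(rootBoundary J Y Z) := by grw [card_image_le]

lemma card_rootBoundary_insert_le (J : SimpleGraph V) (Y Z : Finset V) (x : V) :
    #(rootBoundary J (insert x Y) Z) ≤ #(rootBoundary J Y Z) + 1 := by
  have hsub : rootBoundary J (insert x Y) Z ⊆ insert x (rootBoundary J Y Z) := by
    intro u
    simp only [mem_rootBoundary, mem_insert, mem_sdiff, not_or]
    rintro ⟨rfl | hu, y, ⟨hyZ, -, hyY⟩, huy⟩
    · exact .inl rfl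
    · exact .inr ⟨hu, y, ⟨hyZ, hyY⟩, huy⟩
  exact (card_le_card hsub).trans (card_insert_le _ _)

open Classical in
lemma sum_card_adj_le_eWZ (hYZ : Y ⊆ Z) :
    ∑ u ∈ rootBoundary J Y Z, #{y ∈ Z \ Y | J.Adj u y} ≤ eWZ J Y Z := by
  rw [← card_sigma, ← Set.ncard_coe_finset]
  refine Set.ncard_le_ncard_of_injOn (fun p ↦ s(p.1, p.2)) ?_ ?_ (finite_rootedEdges J Y Z)
  · rintro ⟨u, y⟩ hp
    simp only [mem_coe, mem_sigma, mem_rootBoundary, mem_filter, mem_sdiff] at hp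
    exact mk_mem_rootedEdges.2 ⟨hp.2.2, ⟨hYZ hp.1.1, hp.2.1.1⟩, .inr hp.2.1.2⟩
  · rintro ⟨u, y⟩ hp ⟨u', y'⟩ hp' heq
    simp only [mem_coe, mem_sigma, mem_rootBoundary, mem_filter, mem_sdiff] at hp hp'
    rcases Sym2.eq_iff.1 heq with ⟨rfl, rfl⟩ | ⟨rfl, rfl⟩
    · rfl
    · exact absurd hp.1.1 hp'.2.1.2

end Boundary

section AutGroup

variable {V : Type}

/-- The group `Aut(W,Z)` of automorphisms of `J[W,Z]` fixing `W` pointwise, whose order is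
`autWZ J W Z`. As there, its elements are permutations of the whole ground set. -/
def autGroup (J : SimpleGraph V) (W Z : Finset V) : Subgroup (Equiv.Perm V) where
  carrier := {σ | (∀ v ∈ W, σ v = v) ∧ (∀ v, v ∉ Z → σ v = v) ∧
    ∀ e, e ∈ rootedEdges J W Z ↔ Sym2.map σ e ∈ rootedEdges J W Z}
  one_mem' := by simp
  mul_mem' := by
    rintro σ τ ⟨hσW, hσZ, hσ⟩ ⟨hτW, hτZ, hτ⟩
    refine ⟨fun v hv ↦ by simp [hτW v hv, hσW v hv], fun v hv ↦ by simp [hτZ v hv, hσZ v hv],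
      fun e ↦ ?_⟩
    rw [hτ e, hσ, Sym2.map_map, Equiv.Perm.coe_mul]
  inv_mem' := by
    rintro σ ⟨hσW, hσZ, hσ⟩
    refine ⟨fun v hv ↦ Equiv.Perm.inv_eq_iff_eq.2 (hσW v hv).symm,
      fun v hv ↦ Equiv.Perm.inv_eq_iff_eq.2 (hσZ v hv).symm, fun e ↦ ?_⟩
    rw [hσ (Sym2.map _ e), Sym2.map_map, ← Equiv.Perm.coe_mul, mul_inv_cancel,
      Equiv.Perm.coe_one, Sym2.map_id, id]

lemma autWZ_eq_card_autGroup (J : SimpleGraph V) (W Z : Finset V) :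
    autWZ J W Z = Nat.card (autGroup J W Z) := rfl

variable {J : SimpleGraph V} {W Y Z : Finset V} {σ : Equiv.Perm V}

lemma mk_apply_mem_rootedEdges_iff (hσ : σ ∈ autGroup J Y Z) {a b : V} :
    s(σ a, σ b) ∈ rootedEdges J Y Z ↔ s(a, b) ∈ rootedEdges J Y Z :=
  (hσ.2.2 s(a, b)).symm

lemma mem_autGroup_iff_of_subset (hYW : Y ⊆ W) :
    σ ∈ autGroup J W Z ↔ σ ∈ autGroup J Y Z ∧ ∀ v ∈ W, σ v = v := by
  have mem_W_iff (hσ : ∀ v ∈ W, σ v = v) (v : V) : σ v ∈ W ↔ v ∈ W :=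
    ⟨fun hv ↦ by rwa [← σ.injective (hσ _ hv)], fun hv ↦ by rwa [hσ v hv]⟩
  constructor
  · rintro ⟨hW, hZ, hE⟩
    refine ⟨⟨fun v hv ↦ hW v (hYW hv), hZ, fun e ↦ ?_⟩, hW⟩
    induction e with | _ a b
    have hab := hE s(a, b)
    rw [Sym2.map_mk, mk_mem_rootedEdges, mk_mem_rootedEdges, mem_W_iff hW, mem_W_iff hW] at hab
    rw [Sym2.map_mk]
    by_cases habW : a ∈ W ∧ b ∈ W
    · rw [hW a habW.1, hW b habW.2]
    · rw [mk_mem_rootedEdges, mk_mem_rootedEdges]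
      grind
  · rintro ⟨⟨hY, hZ, hE⟩, hW⟩
    refine ⟨hW, hZ, fun e ↦ ?_⟩
    induction e with | _ a b
    have hab := hE s(a, b)
    rw [Sym2.map_mk, mk_mem_rootedEdges, mk_mem_rootedEdges] at hab ⊢
    rw [mem_W_iff hW, mem_W_iff hW]
    grind

section

variable [DecidableEq V]

lemma apply_eq_self_of_mem_autGroup (hσ : σ ∈ autGroup J Y Z) {v : V} (hv : v ∉ Z \ Y) :
    σ v = v := by
  by_cases hvZ : v ∈ Z
  · exact hσ.1 v (by simpa [hvZ] using hv)
  · exact hσ.2.1 v hvZ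

lemma apply_mem_sdiff_iff_of_mem_autGroup (hσ : σ ∈ autGroup J Y Z) {v : V} :
    σ v ∈ Z \ Y ↔ v ∈ Z \ Y := by
  refine ⟨not_imp_not.1 fun hv ↦ by rwa [apply_eq_self_of_mem_autGroup hσ hv],
    not_imp_not.1 fun hv ↦ ?_⟩
  rwa [← σ.injective (apply_eq_self_of_mem_autGroup hσ hv)]

/-- The inclusion of `Aut(Y,Z)` into the symmetric group of `Z \ Y`. -/
def autGroupToPerm (J : SimpleGraph V) (Y Z : Finset V) (σ : autGroup J Y Z) :
    Equiv.Perm {v // v ∈ Z \ Y} :=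
  σ.1.subtypePerm fun _ ↦ apply_mem_sdiff_iff_of_mem_autGroup σ.2

lemma autGroup_ext {σ τ : autGroup J Y Z} (h : ∀ v ∈ Z \ Y, σ.1 v = τ.1 v) : σ = τ := by
  ext v
  by_cases hv : v ∈ Z \ Y
  · exact h v hv
  · rw [apply_eq_self_of_mem_autGroup σ.2 hv, apply_eq_self_of_mem_autGroup τ.2 hv]

lemma autGroupToPerm_injective (J : SimpleGraph V) (Y Z : Finset V) :
    Function.Injective (autGroupToPerm J Y Z) := fun _ _ h ↦
  autGroup_ext fun v hv ↦ congrArg (fun τ ↦ (τ ⟨v, hv⟩).1) h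

end

instance : Finite (autGroup J Y Z) := by
  classical
  exact .of_injective _ (autGroupToPerm_injective J Y Z)

lemma autWZ_pos (J : SimpleGraph V) (Y Z : Finset V) : 0 < autWZ J Y Z :=
  Nat.card_pos (α := autGroup J Y Z)

variable [DecidableEq V]

lemma autWZ_le_factorial (J : SimpleGraph V) (Y Z : Finset V) :
    autWZ J Y Z ≤ (#(Z \ Y)).factorial := by
  have hle := Nat.card_le_card_of_injective _ (autGroupToPerm_injective J Y Z)
  rwa [Nat.card_perm, Nat.card_eq_finsetCard] at hle

lemma subgroupOf_autGroup_insert (J : SimpleGraph V) (Y Z : Finset V) (x : V) :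
    (autGroup J (insert x Y) Z).subgroupOf (autGroup J Y Z) =
      MulAction.stabilizer (autGroup J Y Z) x := by
  ext σ
  rw [Subgroup.mem_subgroupOf, mem_autGroup_iff_of_subset (subset_insert x Y),
    MulAction.mem_stabilizer_iff, forall_mem_insert]
  exact ⟨fun h ↦ h.2.1, fun h ↦ ⟨σ.2, h, σ.2.1⟩⟩

lemma card_orbit_mul_autWZ_insert (J : SimpleGraph V) (Y Z : Finset V) (x : V) :
    (MulAction.orbit (autGroup J Y Z) x).ncard * autWZ J (insert x Y) Z = autWZ J Y Z := by
  have hle : autGroup J (insert x Y) Z ≤ autGroup J Y Z := fun _ hσ ↦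
    ((mem_autGroup_iff_of_subset (subset_insert x Y)).1 hσ).1
  rw [autWZ_eq_card_autGroup, autWZ_eq_card_autGroup, ← MulAction.index_stabilizer,
    ← Nat.card_congr (Subgroup.subgroupOfEquivOfLe hle).toEquiv, subgroupOf_autGroup_insert,
    Subgroup.index_mul_card]

open Classical in
lemma orbit_subset_filter_adj {u x : V} (hYZ : Y ⊆ Z) (hu : u ∈ Y) (hx : x ∈ Z \ Y)
    (hux : J.Adj u x) :
    MulAction.orbit (autGroup J Y Z) x ⊆ ({y ∈ Z \ Y | J.Adj u y} : Finset V) := by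
  rintro _ ⟨⟨σ, hσ⟩, rfl⟩
  have hxσ : σ x ∈ Z \ Y := (apply_mem_sdiff_iff_of_mem_autGroup hσ).2 hx
  have hmem : s(u, x) ∈ rootedEdges J Y Z :=
    mk_mem_rootedEdges.2 ⟨hux, ⟨hYZ hu, (mem_sdiff.1 hx).1⟩, .inr (mem_sdiff.1 hx).2⟩
  rw [← mk_apply_mem_rootedEdges_iff hσ, hσ.1 u hu, mk_mem_rootedEdges] at hmem
  exact mem_coe.2 (mem_filter.2 ⟨hxσ, hmem.1⟩)

lemma exists_card_orbit_le {m : ℝ} (hYZ : Y ⊆ Z) (hne : (rootBoundary J Y Z).Nonempty)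
    (he : eWZ J Y Z ≤ #(rootBoundary J Y Z) * m) :
    ∃ x ∈ Z \ Y, (MulAction.orbit (autGroup J Y Z) x).ncard ≤ m := by
  classical
  have hsum : ∑ u ∈ rootBoundary J Y Z, (#{y ∈ Z \ Y | J.Adj u y} : ℝ) ≤
      ∑ _u ∈ rootBoundary J Y Z, m := by
    rw [sum_const, nsmul_eq_mul]
    exact le_trans (mod_cast sum_card_adj_le_eWZ hYZ) he
  obtain ⟨u, hu, hdeg⟩ := exists_le_of_sum_le hne hsum
  obtain ⟨huY, x, hx, hux⟩ := mem_rootBoundary.1 hu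
  refine ⟨x, hx, le_trans (Nat.cast_le.2 ?_) hdeg⟩
  rw [← Set.ncard_coe_finset]
  exact Set.ncard_le_ncard (orbit_subset_filter_adj hYZ huY hx hux) (finite_toSet _)

end AutGroup

section Bounds

variable {V : Type} {J : SimpleGraph V} {W Y Z : Finset V} {L : ℝ}

lemma autWZ_self (J : SimpleGraph V) (Z : Finset V) : autWZ J Z Z = 1 := by
  classical
  exact le_antisymm (by simpa using autWZ_le_factorial J Z Z) (autWZ_pos J Z Z)

lemma BoundaryExpanding.autWZ_le_pow [DecidableEq V] (h : BoundaryExpanding L J W Z)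
    (hWY : W ⊂ Y) (hYZ : Y ⊆ Z) : autWZ J Y Z ≤ L ^ #(Z \ Y) := by
  induction hk : #(Z \ Y) generalizing Y with
  | zero =>
    obtain rfl := hYZ.antisymm (sdiff_eq_empty_iff_subset.1 (card_eq_zero.1 hk))
    simp [autWZ_self]
  | succ k ih =>
    have hYZ' : Y ⊂ Z := hYZ.ssubset_of_ne (by rintro rfl; simp at hk)
    obtain ⟨x, hx, horbit⟩ :=
      exists_card_orbit_le hYZ (h.rootBoundary_nonempty hWY hYZ') (h.eWZ_le hWY hYZ)
    have hcard := card_sdiff_insert_add_one hx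
    have hle := ih (hWY.trans_subset (subset_insert x Y))
      (insert_subset (mem_sdiff.1 hx).1 hYZ) (by lia)
    rw [← card_orbit_mul_autWZ_insert J Y Z x, Nat.cast_mul, pow_succ']
    gcongr
    exact (Nat.cast_nonneg _).trans horbit

lemma BoundaryExpanding.eWZ_root_le (h : BoundaryExpanding L J W Z) (hL : 0 ≤ L) (hWZ : W ⊂ Z) :
    eWZ J W Z ≤ (#(rootBoundary J W Z) + 1) * L + #(rootBoundary J W Z) := by
  classical
  obtain ⟨x, hx⟩ := sdiff_nonempty.2 hWZ.not_subset
  obtain ⟨hxZ, hxW⟩ := mem_sdiff.1 hx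
  calc (eWZ J W Z : ℝ)
    _ ≤ eWZ J (insert x W) Z + #(rootBoundary J W Z) := by
      exact_mod_cast eWZ_le_eWZ_insert_add_card_rootBoundary hx
    _ ≤ #(rootBoundary J (insert x W) Z) * L + #(rootBoundary J W Z) := by
      grw [h.eWZ_le (ssubset_insert hxW) (insert_subset hxZ hWZ.subset)]
    _ ≤ (#(rootBoundary J W Z) + 1) * L + #(rootBoundary J W Z) := by
      gcongr
      exact_mod_cast card_rootBoundary_insert_le J W Z x

lemma BoundaryExpanding.autWZ_root_le_pow_of_nonempty (h : BoundaryExpanding L J W Z) (hL : 1 ≤ L)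
    (hWZ : W ⊂ Z) (hne : (rootBoundary J W Z).Nonempty) :
    autWZ J W Z ≤ (3 * L) ^ eWZ J W Z := by
  classical
  have hb : (1 : ℝ) ≤ #(rootBoundary J W Z) := mod_cast hne.card_pos
  have he : eWZ J W Z ≤ #(rootBoundary J W Z) * (3 * L) := by
    have hle := h.eWZ_root_le (by positivity) hWZ
    nlinarith
  obtain ⟨x, hx, horbit⟩ := exists_card_orbit_le hWZ.subset hne he
  obtain ⟨hxZ, hxW⟩ := mem_sdiff.1 hx
  calc (autWZ J W Z : ℝ)
    _ = (MulAction.orbit (autGroup J W Z) x).ncard * autWZ J (insert x W) Z := by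
      rw [← card_orbit_mul_autWZ_insert J W Z x, Nat.cast_mul]
    _ ≤ 3 * L * L ^ #(Z \ insert x W) := by
      gcongr
      exact h.autWZ_le_pow (ssubset_insert hxW) (insert_subset hxZ hWZ.subset)
    _ ≤ 3 * L * (3 * L) ^ #(Z \ insert x W) := by
      gcongr
      linarith
    _ = (3 * L) ^ #(Z \ W) := by rw [← pow_succ', card_sdiff_insert_add_one hx]
    _ ≤ (3 * L) ^ eWZ J W Z := by
      gcongr
      · linarith
      · exact h.card_sdiff_root_le_eWZ hWZ.subset hne

lemma factorial_le_pow_sub_one (v : ℕ) : v.factorial ≤ v ^ (v - 1) := by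
  cases v with
  | zero => simp
  | succ k =>
    calc (k + 1).factorial
      _ = (k + 1).descFactorial k := by
        rw [← Nat.descFactorial_self, Nat.descFactorial_succ, Nat.add_sub_cancel_left, one_mul]
      _ ≤ (k + 1) ^ k := Nat.descFactorial_le_pow _ _

lemma BoundaryExpanding.autWZ_root_le_card_pow [DecidableEq V]
    (h : BoundaryExpanding L J W Z) (hWZ : W ⊆ Z) : autWZ J W Z ≤ #(Z \ W) ^ eWZ J W Z := by
  obtain rfl | hWZ := hWZ.eq_or_ssubset
  · simp [autWZ_self]
  have hpos : 0 < #(Z \ W) := card_pos.2 (sdiff_nonempty.2 hWZ.not_subset)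
  calc autWZ J W Z
    _ ≤ (#(Z \ W)).factorial := autWZ_le_factorial J W Z
    _ ≤ #(Z \ W) ^ (#(Z \ W) - 1) := factorial_le_pow_sub_one _
    _ ≤ #(Z \ W) ^ eWZ J W Z :=
      Nat.pow_le_pow_right hpos (Nat.sub_le_of_le_add (h.card_sdiff_root_le_eWZ_add_one hWZ))

lemma BoundaryExpanding.autWZ_root_le_pow (h : BoundaryExpanding L J W Z) (hL : 1 ≤ L)
    (hWZ : W ⊂ Z) : autWZ J W Z ≤ (3 * L) ^ eWZ J W Z := by
  classical
  obtain hempty | hne := (rootBoundary J W Z).eq_empty_or_nonempty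
  · have he : (eWZ J W Z : ℝ) ≤ L := by
      simpa [hempty] using h.eWZ_root_le (by positivity) hWZ
    have hv : (#(Z \ W) : ℝ) ≤ eWZ J W Z + 1 := mod_cast h.card_sdiff_root_le_eWZ_add_one hWZ
    calc (autWZ J W Z : ℝ)
      _ ≤ (#(Z \ W) : ℝ) ^ eWZ J W Z := mod_cast h.autWZ_root_le_card_pow hWZ.subset
      _ ≤ (3 * L) ^ eWZ J W Z := by
        gcongr
        linarith
  · exact h.autWZ_root_le_pow_of_nonempty hL hWZ hne

end Bounds

section Sparse

variable {V : Type} {J : SimpleGraph V} {W Y Z : Finset V} {n : ℕ} {q r : ℝ}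

lemma ExpSparse.card_le {β : Type} {G : SimpleGraph β} (h : ExpSparse n q G) : Nat.card β ≤ n := by
  by_contra! hlt
  have hzero : n.descFactorial (Nat.card (⊤ : G.Subgraph).verts) = 0 := by
    rwa [Subgraph.verts_top, Nat.card_univ, Nat.descFactorial_eq_zero_iff_lt]
  have htop := h ⊤
  rw [hzero, Nat.cast_zero, zero_mul, zero_div] at htop
  exact htop.not_gt one_pos

variable [DecidableEq V]

/-- `J[Y,Z]` without its isolated roots, as a subgraph of `J[Z]`: its vertices are those of `Z \ Y`
together with the boundary. Sparsity is applied to this subgraph. -/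
def rootedSubgraph (J : SimpleGraph V) (Y Z : Finset V) :
    (J.induce (Z : Set V)).Subgraph where
  verts := {a | a.1 ∈ Z \ Y ∪ rootBoundary J Y Z}
  Adj a b := s(a.1, b.1) ∈ rootedEdges J Y Z
  adj_sub h := (mk_mem_rootedEdges.1 h).1
  edge_vert {a b} h := by
    obtain ⟨hab, ⟨ha, hb⟩, hY⟩ := mk_mem_rootedEdges.1 h
    by_cases haY : a.1 ∈ Y
    · exact mem_union_right _ (mem_rootBoundary.2
        ⟨haY, b.1, mem_sdiff.2 ⟨hb, hY.resolve_left (not_not.2 haY)⟩, hab⟩)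
    · exact mem_union_left _ (mem_sdiff.2 ⟨ha, haY⟩)
  symm := ⟨fun a b h ↦ by rwa [Sym2.eq_swap]⟩

lemma disjoint_sdiff_rootBoundary (J : SimpleGraph V) (Y Z : Finset V) :
    Disjoint (Z \ Y) (rootBoundary J Y Z) :=
  sdiff_disjoint.mono_right fun _ hu ↦ (mem_rootBoundary.1 hu).1

lemma card_verts_rootedSubgraph (hYZ : Y ⊆ Z) :
    Nat.card (rootedSubgraph J Y Z).verts = #(Z \ Y) + #(rootBoundary J Y Z) := by
  have hsub : Z \ Y ∪ rootBoundary J Y Z ⊆ Z :=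
    union_subset sdiff_subset fun _ hu ↦ hYZ (mem_rootBoundary.1 hu).1
  rw [← card_union_of_disjoint (disjoint_sdiff_rootBoundary J Y Z), ← Set.ncard_coe_finset]
  exact Set.ncard_preimage_of_injective_subset_range Subtype.val_injective
    (by simpa using coe_subset.2 hsub)

lemma card_edgeSet_rootedSubgraph (J : SimpleGraph V) (Y Z : Finset V) :
    Nat.card (rootedSubgraph J Y Z).edgeSet = eWZ J Y Z := by
  have hpre : (rootedSubgraph J Y Z).edgeSet = Sym2.map Subtype.val ⁻¹' rootedEdges J Y Z := by
    ext e
    induction e with | _ a b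
    rfl
  rw [hpre]
  refine Nat.card_preimage_of_injective (Sym2.map.injective Subtype.val_injective) fun e he ↦ ?_
  induction e with | _ a b
  obtain ⟨-, ⟨ha, hb⟩, -⟩ := mk_mem_rootedEdges.1 he
  exact ⟨s(⟨a, ha⟩, ⟨b, hb⟩), rfl⟩

lemma apply_mem_iff_of_sdiff_subset {S : Finset V} (hS : Z \ Y ⊆ S) {σ : Equiv.Perm V}
    (hσ : σ ∈ autGroup J Y Z) (v : V) : σ v ∈ S ↔ v ∈ S := by
  by_cases hv : v ∈ Z \ Y
  · exact iff_of_true (hS ((apply_mem_sdiff_iff_of_mem_autGroup hσ).2 hv)) (hS hv)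
  · rw [apply_eq_self_of_mem_autGroup hσ hv]

/-- The action of `Aut(Y,Z)` on the graph `rootedSubgraph J Y Z`. -/
def autGroupToIso (J : SimpleGraph V) (Y Z : Finset V) (σ : autGroup J Y Z) :
    (rootedSubgraph J Y Z).coe ≃g (rootedSubgraph J Y Z).coe where
  toEquiv := (σ.1.subtypePerm (apply_mem_iff_of_sdiff_subset sdiff_subset σ.2)).subtypePerm
    fun a ↦ apply_mem_iff_of_sdiff_subset subset_union_left σ.2 a.1
  map_rel_iff' := mk_apply_mem_rootedEdges_iff σ.2

lemma autGroupToIso_injective (J : SimpleGraph V) (Y Z : Finset V) :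
    Function.Injective (autGroupToIso J Y Z) := fun _ _ h ↦
  autGroup_ext fun v hv ↦
    congrArg (fun f ↦ (f ⟨⟨v, (mem_sdiff.1 hv).1⟩, mem_union_left _ hv⟩).1.1) h

lemma autWZ_le_card_iso_rootedSubgraph (J : SimpleGraph V) (Y Z : Finset V) :
    autWZ J Y Z ≤ Nat.card ((rootedSubgraph J Y Z).coe ≃g (rootedSubgraph J Y Z).coe) :=
  have : Finite ((rootedSubgraph J Y Z).coe ≃g (rootedSubgraph J Y Z).coe) :=
    .of_injective _ RelIso.toEquiv_injective
  Nat.card_le_card_of_injective _ (autGroupToIso_injective J Y Z)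

lemma ExpSparse.autWZ_le (h : ExpSparse n q (J.induce (Z : Set V))) (hYZ : Y ⊆ Z) :
    autWZ J Y Z ≤ n.descFactorial (#(Z \ Y) + #(rootBoundary J Y Z)) * q ^ eWZ J Y Z := by
  have hle := autWZ_le_card_iso_rootedSubgraph J Y Z
  have hpos : (0 : ℝ) < Nat.card ((rootedSubgraph J Y Z).coe ≃g (rootedSubgraph J Y Z).coe) :=
    mod_cast (autWZ_pos J Y Z).trans_le hle
  have hsparse := h (rootedSubgraph J Y Z)
  rw [one_le_div hpos, card_verts_rootedSubgraph hYZ, card_edgeSet_rootedSubgraph] at hsparse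
  exact le_trans (mod_cast hle) hsparse

lemma ExpSparse.two_pow_eWZ_lt (h : ExpSparse n (r / 2) (J.induce (Z : Set V))) (hYZ : Y ⊆ Z)
    (hmu : mu n r J Y Z < 1) : (2 : ℝ) ^ eWZ J Y Z < n ^ #(rootBoundary J Y Z) := by
  have haut : (0 : ℝ) < autWZ J Y Z := mod_cast autWZ_pos J Y Z
  rw [mu, div_lt_one haut] at hmu
  have hr : 0 < (r / 2) ^ eWZ J Y Z :=
    pos_of_mul_pos_right (haut.trans_le (h.autWZ_le hYZ)) (Nat.cast_nonneg _)
  have hchain : (n : ℝ) ^ #(Z \ Y) * (r / 2) ^ eWZ J Y Z * 2 ^ eWZ J Y Z <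
      n ^ #(Z \ Y) * (r / 2) ^ eWZ J Y Z * n ^ #(rootBoundary J Y Z) :=
    calc (n : ℝ) ^ #(Z \ Y) * (r / 2) ^ eWZ J Y Z * 2 ^ eWZ J Y Z
      _ = n ^ #(Z \ Y) * r ^ eWZ J Y Z := by
        rw [mul_assoc, ← mul_pow, div_mul_cancel₀ r two_ne_zero]
      _ < autWZ J Y Z := hmu
      _ ≤ n.descFactorial (#(Z \ Y) + #(rootBoundary J Y Z)) * (r / 2) ^ eWZ J Y Z :=
        h.autWZ_le hYZ
      _ ≤ n ^ (#(Z \ Y) + #(rootBoundary J Y Z)) * (r / 2) ^ eWZ J Y Z := by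
        gcongr
        exact_mod_cast Nat.descFactorial_le_pow _ _
      _ = n ^ #(Z \ Y) * (r / 2) ^ eWZ J Y Z * n ^ #(rootBoundary J Y Z) := by ring
  exact lt_of_mul_lt_mul_left hchain (by positivity)

lemma ExpSparse.boundaryExpanding (h : ExpSparse n (r / 2) (J.induce (Z : Set V)))
    (hlead : Leading n r J W Z) : BoundaryExpanding (Real.logb 2 n) J W Z := fun Y hWY hYZ ↦ by
  have hlog := Real.logb_lt_logb one_lt_two (by positivity)
    (h.two_pow_eWZ_lt hYZ.subset (hlead Y hWY hYZ))
  rwa [Real.logb_pow, Real.logb_pow, Real.logb_self_eq_one one_lt_two, mul_one] at hlog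

lemma one_le_logb_two_natCast (hn : 2 ≤ n) : 1 ≤ Real.logb 2 n := by
  rw [Real.le_logb_iff_rpow_le one_lt_two (by positivity), Real.rpow_one]
  exact_mod_cast hn

end Sparse

theorem aut_le_min_pow_general {V : Type} [DecidableEq V] {n : ℕ} {r : ℝ} (J : SimpleGraph V)
    (W Z : Finset V) (hWZ : W ⊆ Z) (hlead : Leading n r J W Z)
    (hsparse : ExpSparse n (r / 2) (J.induce (Z : Set V))) :
    (autWZ J W Z : ℝ) ≤ min (#(Z \ W) : ℝ) (3 * Real.logb 2 n) ^ eWZ J W Z := by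
  have hexp := hsparse.boundaryExpanding hlead
  have hcard : (autWZ J W Z : ℝ) ≤ (#(Z \ W) : ℝ) ^ eWZ J W Z :=
    mod_cast hexp.autWZ_root_le_card_pow hWZ
  obtain he | he := eq_or_ne (eWZ J W Z) 0
  · simpa [he] using hcard
  have hWZ' : W ⊂ Z := hWZ.ssubset_of_ne (by rintro rfl; simp at he)
  have hZn : #Z ≤ n := by simpa using hsparse.card_le
  have hL := one_le_logb_two_natCast ((one_lt_card_of_eWZ_ne_zero he).trans_le hZn)
  obtain hmin | hmin := min_choice (#(Z \ W) : ℝ) (3 * Real.logb 2 n)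
  · rwa [hmin]
  · rw [hmin]
    exact hexp.autWZ_root_le_pow hL hWZ'

/-- Corollary 4.4: if `J[W,Z]` is `r`-leading and `J[Z]` is `(r/2)`-sparse, then
`aut(W,Z) ≤ min{v(W,Z), 16 log₂ n}^{e(W,Z)}`. -/
theorem aut_le_min_pow {n : ℕ} {r : ℝ} (hr0 : 0 ≤ r) (hr1 : r ≤ 1)
    (J : SimpleGraph (Fin n)) (W Z : Finset (Fin n)) (hWZ : W ⊆ Z)
    (hlead : Leading n r J W Z)
    (hsparse : ExpSparse n (r / 2) (J.induce (Z : Set (Fin n)))) :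
    (autWZ J W Z : ℝ) ≤
      (min (((Z \ W).card : ℝ)) (16 * Real.logb 2 n)) ^ (eWZ J W Z) := by
  have hL : 0 ≤ Real.logb 2 n := div_nonneg (Real.log_natCast_nonneg n) (Real.log_nonneg one_le_two)
  exact (aut_le_min_pow_general J W Z hWZ hlead hsparse).trans (by gcongr; norm_num)
end
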